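/- For any MDP M given by a symbolic description and any well-labeled finished PASG P for M with root n₀ labeled by the initial valuation, the maximal probability of reaching a target node in the MDP induced by P is at most as high as the maximal probability of reaching a target state in M. -/

import Mathlib

/-!
The argument goes through step-bounded reachability. For an MDP, `boundedReach σ k s h` is the
mass of first-hitting paths of length at most `k` under the strategy `σ`, and `optReach k s` is the
optimal `k`-step value given by value iteration. Two generic facts hold: reachability
probabilities are bounded by any common bound of the `boundedReach` values, and, since there are
finitely many actions, the maximum in each step of value iteration is attained, so that a
strategy which looks at the number of remaining steps realises `optReach k s`
(`optReach_le_PmaxFrom`).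

The comparison of the graph with the symbolic MDP is then a simulation argument
(`boundedReach_le_optReach`): if `s` lies in the concretization of the abstract label of the node
`n`, then any strategy of the graph reaches a target node from `n` within `k` steps with
probability at most `optReach k s`. By A2 the node and the state agree on all guards, in particular on
being a target; a transition edge is imitated by the same command, whose successors are again
related by B2; a covering edge is imitated by staying in `s`, which is related to the covering
node by C2, and only wastes one of the `k` steps.
-/

open scoped ENNReal

/-- A Markov decision process with state space `S` and action set `A`:
`P s a s'` is the transition probability. For the MDPs considered here, for every
`s, a` the total mass `∑' s', P s a s'` is `1` (the action is enabled) or `0`. -/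
structure MDP (S : Type*) (A : Type*) where
  P : S → A → S → ℝ≥0∞
  init : S

namespace MDP

variable {S A : Type*}

/-- An action is enabled in a state iff its outgoing probabilities sum to one. -/
def Enabled (M : MDP S A) (s : S) (a : A) : Prop :=
  (∑' s', M.P s a s') = 1

/-- The last state of a history (a list of action/state steps), given the start state. -/
def lastSt (s : S) (h : List (A × S)) : S :=
  ((h.getLast?).map Prod.snd).getD s

open Classical in
/-- Probability of a finite path (a list of action/state steps) from state `s` with
accumulated history `h`, under the (history-dependent) strategy `σ`. -/
noncomputable def pathProb (M : MDP S A) (σ : List (A × S) → A) :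
    S → List (A × S) → List (A × S) → ℝ≥0∞
  | _, _, [] => 1
  | s, h, (a, s') :: rest =>
      (if σ h = a then M.P s a s' else 0) * pathProb M σ s' (h ++ [(a, s')]) rest

/-- The path visits the target set `E` exactly at its final state and never before. -/
def FirstHit (E : Set S) : S → List (A × S) → Prop
  | s, [] => s ∈ E
  | s, (_, s') :: rest => s ∉ E ∧ FirstHit E s' rest

/-- A finite trace: every step has positive probability. -/
def IsTrace (M : MDP S A) : S → List (A × S) → Prop
  | _, [] => True
  | s, (a, s') :: rest => 0 < M.P s a s' ∧ IsTrace M s' rest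

/-- A strategy is valid from `s₀` if it always chooses an enabled action
whenever some action is enabled in the current state. -/
def ValidFrom (M : MDP S A) (s₀ : S) (σ : List (A × S) → A) : Prop :=
  ∀ h : List (A × S), (∃ a, M.Enabled (lastSt s₀ h) a) → M.Enabled (lastSt s₀ h) (σ h)

/-- Probability of reaching `E` from `s₀` under strategy `σ`: the total mass of the
(pairwise incompatible) first-hitting paths. -/
noncomputable def reachProbFrom (M : MDP S A) (σ : List (A × S) → A) (s₀ : S)
    (E : Set S) : ℝ≥0∞ :=
  ∑' l : {l : List (A × S) // FirstHit E s₀ l}, pathProb M σ s₀ [] l.1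

/-- Maximal probability of reaching `E` from `s`. -/
noncomputable def PmaxFrom (M : MDP S A) (E : Set S) (s : S) : ℝ≥0∞ :=
  ⨆ σ : {σ : List (A × S) → A // ValidFrom M s σ}, reachProbFrom M σ.1 s E

/-- Maximal probability of reaching `E` from the initial state. -/
noncomputable def Pmax (M : MDP S A) (E : Set S) : ℝ≥0∞ :=
  PmaxFrom M E M.init

/-- Minimal probability of reaching `E` from `s`. -/
noncomputable def PminFrom (M : MDP S A) (E : Set S) (s : S) : ℝ≥0∞ :=
  ⨅ σ : {σ : List (A × S) → A // ValidFrom M s σ}, reachProbFrom M σ.1 s E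

/-- Minimal probability of reaching `E` from the initial state. -/
noncomputable def Pmin (M : MDP S A) (E : Set S) : ℝ≥0∞ :=
  PminFrom M E M.init

end MDP

/-- A symbolic MDP over states `Val` (valuations of the variables): a set of commands,
each with a guard and a finite-support distribution over assignments (semantically,
state transformers `Val → Val`), and an initial valuation. -/
structure SymMDP (Val : Type*) (Cmd : Type*) where
  guard : Cmd → Val → Prop
  dist : Cmd → PMF (Val → Val)
  finSupp : ∀ c, (dist c).support.Finite
  init : Val

open Classical in
/-- The MDP induced by a symbolic MDP: command `c` is enabled in `s` iff its guard
holds, and then the next-state distribution is the pushforward of `dist c` under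
evaluation at `s`. -/
noncomputable def SymMDP.toMDP {Val Cmd : Type*} (M : SymMDP Val Cmd) : MDP Val Cmd where
  P := fun s c s' => if M.guard c s then ((M.dist c).map fun a => a s) s' else 0
  init := M.init

/-- Three-valued truth values for evaluating Boolean expressions on abstract states. -/
inductive TV
  | tt
  | ff
  | uk

/-- An abstract domain over the concrete state set `Val`, with partially ordered
abstract states `AS`, abstraction `abstr`, concretization `conc`, and the Galois
condition `abstr A ≤ b ↔ A ⊆ conc b`. -/
structure AbsDom (Val : Type*) (AS : Type*) [PartialOrder AS] where
  abstr : Set Val → AS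
  conc : AS → Set Val
  galois : ∀ (A : Set Val) (b : AS), abstr A ≤ b ↔ A ⊆ conc b

namespace AbsDom

variable {Val AS : Type*} [PartialOrder AS]

open Classical in
/-- Three-valued evaluation of a Boolean expression `b` on an abstract state:
`tt` if it holds in all concretizations, `ff` if in none, `uk` otherwise. -/
noncomputable def beval (D : AbsDom Val AS) (b : Val → Prop) (x : AS) : TV :=
  if ∀ s ∈ D.conc x, b s then TV.tt
  else if ∀ s ∈ D.conc x, ¬ b s then TV.ff
  else TV.uk

/-- The abstract post operator: `post a x = abstr (a '' conc x)`. -/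
def post (D : AbsDom Val AS) (a : Val → Val) (x : AS) : AS :=
  D.abstr (a '' D.conc x)

end AbsDom

open Classical in
/-- Two-valued evaluation of a Boolean expression in a concrete state, as a `TV`. -/
noncomputable def cevalTV {Val : Type*} (b : Val → Prop) (s : Val) : TV :=
  if b s then TV.tt else TV.ff

/-- A probabilistic adaptive simulation graph (PASG). A transition edge `(n, c, f) ∈ ET`
goes from node `n` via command `c`; `f` matches each assignment in the support of `c`'s
distribution with its result node (thereby inducing the node distribution of the edge as
the pushforward of the assignment distribution). `EC n = some n'` means node `n` is
covered by its covering node `n'`; `Lc`/`La` are the concrete/abstract labelings. -/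
structure PASG (Val AS Cmd Node : Type*) where
  ET : Set (Node × Cmd × ((Val → Val) → Node))
  EC : Node → Option Node
  Lc : Node → Val
  La : Node → AS

namespace PASG

variable {Val AS Cmd Node : Type*} [PartialOrder AS]

/-- A node is covered iff it has an outgoing covering edge. -/
def Covered (P : PASG Val AS Cmd Node) (n : Node) : Prop := P.EC n ≠ none

/-- A node is expanded iff every command enabled in its concrete label has a
transition edge. -/
def Expanded (M : SymMDP Val Cmd) (P : PASG Val AS Cmd Node) (n : Node) : Prop :=
  ∀ c, M.guard c (P.Lc n) → ∃ f, (n, c, f) ∈ P.ET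

/-- A PASG is finished iff every node is covered or expanded. -/
def Finished (M : SymMDP Val Cmd) (P : PASG Val AS Cmd Node) : Prop :=
  ∀ n, P.Covered n ∨ P.Expanded M n

/-- The well-labeledness constraints A1, A2, B1, B2, C1, C2, C3, D1. -/
structure WellLabeled (M : SymMDP Val Cmd) (D : AbsDom Val AS)
    (P : PASG Val AS Cmd Node) : Prop where
  /-- A1: the abstract label contains the concrete label. -/
  A1 : ∀ n, P.Lc n ∈ D.conc (P.La n)
  /-- A2: the concrete label exactly represents the abstract label w.r.t. enabledness. -/
  A2 : ∀ n c, D.beval (M.guard c) (P.La n) = cevalTV (M.guard c) (P.Lc n)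
  /-- B1: the command of a transition edge is enabled in the concrete label of its source. -/
  B1 : ∀ e ∈ P.ET, M.guard e.2.1 (P.Lc e.1)
  /-- B2 (probabilities): result nodes of distinct assignments are distinct, hence the
  induced node distribution gives each result node exactly the assignment's probability. -/
  B2inj : ∀ e ∈ P.ET, Set.InjOn e.2.2 (M.dist e.2.1).support
  /-- B2 (concrete labels): the concrete label of a result node is the result of the
  corresponding assignment. -/
  B2c : ∀ e ∈ P.ET, ∀ a ∈ (M.dist e.2.1).support, P.Lc (e.2.2 a) = a (P.Lc e.1)
  /-- B2 (abstract labels): the abstract label of a result node overapproximates the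
  abstract post of the source. -/
  B2a : ∀ e ∈ P.ET, ∀ a ∈ (M.dist e.2.1).support, D.post a (P.La e.1) ≤ P.La (e.2.2 a)
  /-- C1: the abstract label of the covering node contains the concrete label of the
  covered node. -/
  C1 : ∀ n n', P.EC n = some n' → P.Lc n ∈ D.conc (P.La n')
  /-- C2: the covering node is at least as abstract as the covered node. -/
  C2 : ∀ n n', P.EC n = some n' → P.La n ≤ P.La n'
  /-- C3: a covering node is not itself covered. -/
  C3 : ∀ n n', P.EC n = some n' → P.EC n' = none
  /-- D1: at most one node with a given concrete label is non-covered. -/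
  D1 : ∀ n n', n ≠ n' → P.Lc n = P.Lc n' → P.Covered n ∨ P.Covered n'

open Classical in
/-- The MDP induced by a finished PASG with root `n₀`: in a non-covered node a command
is enabled iff it has a transition edge (with the induced node distribution); a covered
node has only the extra `cover` action (`Sum.inr ()`), leading with probability `1` to
its covering node. -/
noncomputable def toMDP (M : SymMDP Val Cmd) (P : PASG Val AS Cmd Node) (n₀ : Node) :
    MDP Node (Cmd ⊕ Unit) where
  init := n₀
  P := fun n act m =>
    match act with
    | Sum.inl c =>
        if h : P.EC n = none ∧ ∃ f, (n, c, f) ∈ P.ET then ((M.dist c).map h.2.choose) m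
        else 0
    | Sum.inr _ =>
        match P.EC n with
        | some n' => if m = n' then 1 else 0
        | none => 0

end PASG

/-! ### Step-bounded reachability and value iteration -/

namespace MDP

variable {S A : Type*}

open Classical in
/-- Mass of the first-hitting paths of length at most `k` from `s`, with accumulated history `h`,
under the strategy `σ`. -/
noncomputable def boundedReach (M : MDP S A) (E : Set S) (σ : List (A × S) → A) (k : ℕ) (s : S)
    (h : List (A × S)) : ℝ≥0∞ :=
  ∑' l : List (A × S), if FirstHit E s l ∧ l.length ≤ k then pathProb M σ s h l else 0

open Classical in
/-- Optimal probability of reaching `E` from `s` within `k` steps, by value iteration. Actions that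
are not enabled contribute `0` to the supremum. -/
noncomputable def optReach (M : MDP S A) (E : Set S) : ℕ → S → ℝ≥0∞
  | 0, s => if s ∈ E then 1 else 0
  | k + 1, s => if s ∈ E then 1 else ⨆ a, ∑' s', M.P s a s' * optReach M E k s'

/-- Splitting a sum over lists into the empty list and the nonempty ones. -/
lemma tsum_list {B : Type*} (g : List B → ℝ≥0∞) :
    ∑' l, g l = g [] + ∑' (b : B) (l : List B), g (b :: l) := by
  let e : Unit ⊕ (B × List B) ≃ List B :=
    { toFun := Sum.elim (fun _ => []) (fun p => p.1 :: p.2)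
      invFun := fun l => match l with
        | [] => Sum.inl ()
        | b :: l => Sum.inr (b, l)
      left_inv := by rintro (_ | ⟨b, l⟩) <;> rfl
      right_inv := by rintro (_ | ⟨b, l⟩) <;> rfl }
  rw [← e.tsum_eq, ENNReal.summable.tsum_sum ENNReal.summable, ← ENNReal.tsum_prod]
  simp [e]

lemma boundedReach_of_mem (M : MDP S A) {E : Set S} (σ : List (A × S) → A) (k : ℕ) {s : S}
    (h : List (A × S)) (hs : s ∈ E) : boundedReach M E σ k s h = 1 := by
  rw [boundedReach, tsum_list]
  simp [FirstHit, hs, pathProb]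

lemma boundedReach_zero (M : MDP S A) {E : Set S} (σ : List (A × S) → A) {s : S}
    (h : List (A × S)) (hs : s ∉ E) : boundedReach M E σ 0 s h = 0 := by
  rw [boundedReach, tsum_list]
  simp [FirstHit, hs]

lemma boundedReach_succ (M : MDP S A) {E : Set S} (σ : List (A × S) → A) (k : ℕ) {s : S}
    (h : List (A × S)) (hs : s ∉ E) :
    boundedReach M E σ (k + 1) s h =
      ∑' s', M.P s (σ h) s' * boundedReach M E σ k s' (h ++ [(σ h, s')]) := by
  classical
  rw [boundedReach, tsum_list, ENNReal.tsum_prod', tsum_eq_single (σ h)]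
  · simp only [FirstHit, hs, pathProb, boundedReach, ← ENNReal.tsum_mul_left]
    simp
  · intro a ha
    simp [pathProb, Ne.symm ha]

/-- A finite family of paths has bounded length, so the step-bounded probabilities exhaust the
reachability probability. -/
lemma reachProbFrom_le_of_boundedReach_le (M : MDP S A) (E : Set S) (σ : List (A × S) → A) (s : S)
    (b : ℝ≥0∞) (hb : ∀ k, boundedReach M E σ k s [] ≤ b) : reachProbFrom M σ s E ≤ b := by
  classical
  rw [reachProbFrom, ENNReal.tsum_eq_iSup_sum]
  refine iSup_le fun F => ?_
  refine le_trans ?_ (hb (F.sup fun l => l.1.length))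
  rw [boundedReach]
  refine le_trans ?_ (ENNReal.sum_le_tsum (F.map (Function.Embedding.subtype _)))
  rw [Finset.sum_map]
  refine Finset.sum_le_sum fun l hl => ?_
  have hlen : l.1.length ≤ F.sup fun l => l.1.length :=
    Finset.le_sup (f := fun l : {l : List (A × S) // FirstHit E s l} => l.1.length) hl
  simp [l.2, hlen]

lemma boundedReach_le_reachProbFrom (M : MDP S A) (E : Set S) (σ : List (A × S) → A) (s : S)
    (k : ℕ) : boundedReach M E σ k s [] ≤ reachProbFrom M σ s E := by
  classical
  rw [reachProbFrom, boundedReach]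
  have := tsum_subtype {l : List (A × S) | FirstHit E s l} (fun l => pathProb M σ s [] l)
  refine le_trans ?_ this.ge
  refine ENNReal.tsum_le_tsum fun l => ?_
  by_cases hl : FirstHit E s l
  · simp only [hl, true_and, Set.indicator, Set.mem_ofPred_eq, if_true]
    split_ifs <;> simp
  · simp [hl]

lemma optReach_of_mem (M : MDP S A) {E : Set S} (k : ℕ) {s : S} (hs : s ∈ E) :
    optReach M E k s = 1 := by
  cases k <;> simp [optReach, hs]

lemma optReach_le_succ (M : MDP S A) (E : Set S) (k : ℕ) (s : S) :
    optReach M E k s ≤ optReach M E (k + 1) s := by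
  induction k generalizing s with
  | zero =>
    by_cases hs : s ∈ E
    · simp [optReach, hs]
    · simp [optReach, hs]
  | succ k ih =>
    rw [optReach, optReach]
    split_ifs with hs
    · exact le_rfl
    · exact iSup_mono fun a => ENNReal.tsum_le_tsum fun s' => mul_le_mul_right (ih s') _

lemma lastSt_append (s : S) (h : List (A × S)) (a : A) (s' : S) :
    lastSt s (h ++ [(a, s')]) = s' := by
  simp [lastSt]

/-- The supremum of finitely many one-step values is attained, by an enabled action if there is
one. -/
lemma exists_best [Finite A] [Nonempty A] (M : MDP S A)
    (hM : ∀ s a, M.Enabled s a ∨ ∀ s', M.P s a s' = 0) (w : S → ℝ≥0∞) (s : S) :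
    ∃ a, ((∃ b, M.Enabled s b) → M.Enabled s a) ∧
      ⨆ b, ∑' s', M.P s b s' * w s' ≤ ∑' s', M.P s a s' * w s' := by
  obtain ⟨a, ha⟩ := exists_eq_ciSup_of_finite (f := fun b => ∑' s', M.P s b s' * w s')
  rcases hM s a with he | h0
  · exact ⟨a, fun _ => he, ha.ge⟩
  -- A disabled maximiser forces the supremum to be `0`, so any action attains it.
  · have hz : ⨆ b, ∑' s', M.P s b s' * w s' = 0 := by rw [← ha]; simp [h0]
    by_cases hex : ∃ b, M.Enabled s b
    · obtain ⟨b, hb⟩ := hex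
      exact ⟨b, fun _ => hb, by rw [hz]; exact zero_le⟩
    · exact ⟨a, fun h => absurd h hex, ha.ge⟩

/-- The `k`-step optimum is realised by a strategy playing an optimal action for the remaining
number of steps. -/
lemma optReach_le_PmaxFrom [Finite A] [Nonempty A] (M : MDP S A)
    (hM : ∀ s a, M.Enabled s a ∨ ∀ s', M.P s a s' = 0) (E : Set S) (k : ℕ) (s₀ : S) :
    optReach M E k s₀ ≤ PmaxFrom M E s₀ := by
  choose best hen hbest using fun j s => exists_best M hM (optReach M E j) s
  -- With history `h`, the step about to be taken leaves `k - h.length - 1` further steps.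
  let σ : List (A × S) → A := fun h => best (k - h.length - 1) (lastSt s₀ h)
  have hσ : ValidFrom M s₀ σ := fun h hh => hen _ _ hh
  have key : ∀ j h, h.length + j = k →
      optReach M E j (lastSt s₀ h) ≤ boundedReach M E σ j (lastSt s₀ h) h := by
    intro j
    induction j with
    | zero =>
      intro h _
      by_cases hs : lastSt s₀ h ∈ E
      · rw [boundedReach_of_mem _ _ _ _ hs, optReach_of_mem _ _ hs]
      · simp [optReach, hs]
    | succ j ih =>
      intro h hk
      by_cases hs : lastSt s₀ h ∈ E
      · rw [boundedReach_of_mem _ _ _ _ hs, optReach_of_mem _ _ hs]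
      · rw [boundedReach_succ _ _ _ _ hs, optReach, if_neg hs]
        have hj : k - h.length - 1 = j := by omega
        have hσh : σ h = best j (lastSt s₀ h) := by simp only [σ, hj]
        refine (hbest j _).trans ?_
        rw [← hσh]
        refine ENNReal.tsum_le_tsum fun s' => mul_le_mul_right ?_ _
        have := ih (h ++ [(σ h, s')]) (by simp; omega)
        rwa [lastSt_append] at this
  have h1 := key k [] (by simp)
  refine le_trans h1 ((boundedReach_le_reachProbFrom M E σ s₀ k).trans ?_)
  exact le_iSup (fun σ : {σ : List (A × S) → A // ValidFrom M s₀ σ} =>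
    reachProbFrom M σ.1 s₀ E) ⟨σ, hσ⟩

end MDP

/-! ### The simulation of the graph by the symbolic MDP -/

lemma SymMDP.enabled_or_zero {Val Cmd : Type*} (M : SymMDP Val Cmd) (s : Val) (c : Cmd) :
    M.toMDP.Enabled s c ∨ ∀ s', M.toMDP.P s c s' = 0 := by
  by_cases hg : M.guard c s
  · left
    simp only [MDP.Enabled, SymMDP.toMDP, hg, if_true]
    exact PMF.tsum_coe _
  · right
    simp [SymMDP.toMDP, hg]

/-- Change of variables for the expectation under a pushforward. -/
lemma tsum_map_mul {α β : Type*} (p : PMF α) (f : α → β) (w : β → ℝ≥0∞) :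
    ∑' b, p.map f b * w b = ∑' a, p a * w (f a) := by
  classical
  simp only [PMF.map_apply, ← ENNReal.tsum_mul_right]
  rw [ENNReal.tsum_comm]
  refine tsum_congr fun a => ?_
  rw [tsum_eq_single (f a)]
  · simp
  · intro b hb
    simp [hb]

lemma AbsDom.conc_mono {Val AS : Type*} [PartialOrder AS] (D : AbsDom Val AS) {x y : AS}
    (h : x ≤ y) : D.conc x ⊆ D.conc y :=
  (D.galois _ _).1 (((D.galois _ _).2 subset_rfl).trans h)

namespace PASG

variable {Val AS Cmd Node : Type*} [PartialOrder AS]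

/-- By A2, all states represented by a node agree with its concrete label on every guard. -/
lemma WellLabeled.guard_iff {M : SymMDP Val Cmd} {D : AbsDom Val AS} {P : PASG Val AS Cmd Node}
    (hwl : WellLabeled M D P) {n : Node} {s : Val} (hs : s ∈ D.conc (P.La n)) (c : Cmd) :
    M.guard c (P.Lc n) ↔ M.guard c s := by
  have h2 := hwl.A2 n c
  unfold AbsDom.beval cevalTV at h2
  split_ifs at h2 with ha hb hn hc
  · exact ⟨fun _ => ha s hs, fun _ => hb⟩
  · exact ⟨fun h => absurd h hc, fun h => absurd h (hn s hs)⟩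

/-- The simulation: a state represented by a node does at least as well as the node, for every
strategy of the graph and every step bound. -/
lemma boundedReach_le_optReach {M : SymMDP Val Cmd} {D : AbsDom Val AS}
    {P : PASG Val AS Cmd Node} (hwl : WellLabeled M D P) (tc : Cmd) (n₀ : Node)
    (σ : List ((Cmd ⊕ Unit) × Node) → Cmd ⊕ Unit) (k : ℕ) (n : Node) (s : Val)
    (h : List ((Cmd ⊕ Unit) × Node)) (hs : s ∈ D.conc (P.La n)) :
    MDP.boundedReach (toMDP M P n₀) {n | M.guard tc (P.Lc n)} σ k n h ≤
      MDP.optReach M.toMDP {s | M.guard tc s} k s := by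
  classical
  induction k generalizing n s h with
  | zero =>
    by_cases ht : n ∈ {n | M.guard tc (P.Lc n)}
    · rw [MDP.optReach_of_mem _ _ (show s ∈ {s | M.guard tc s} from (hwl.guard_iff hs tc).1 ht),
        MDP.boundedReach_of_mem _ _ _ _ ht]
    · rw [MDP.boundedReach_zero _ _ _ ht]; exact zero_le
  | succ k ih =>
    by_cases ht : n ∈ {n | M.guard tc (P.Lc n)}
    · rw [MDP.optReach_of_mem _ _ (show s ∈ {s | M.guard tc s} from (hwl.guard_iff hs tc).1 ht),
        MDP.boundedReach_of_mem _ _ _ _ ht]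
    rw [MDP.boundedReach_succ _ _ _ _ ht]
    have hts : s ∉ {s | M.guard tc s} := fun h' => ht ((hwl.guard_iff hs tc).2 h')
    rcases hact : σ h with c | u
    · by_cases he : P.EC n = none ∧ ∃ f, (n, c, f) ∈ P.ET
      · have hmem := he.2.choose_spec
        have hg : M.guard c s := (hwl.guard_iff hs c).1 (hwl.B1 _ hmem)
        simp only [toMDP, dif_pos he]
        rw [tsum_map_mul, MDP.optReach, if_neg hts]
        refine le_trans ?_ (le_iSup _ c)
        simp only [SymMDP.toMDP, hg, if_true]
        rw [tsum_map_mul]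
        refine ENNReal.tsum_le_tsum fun a => ?_
        by_cases ha : a ∈ (M.dist c).support
        · refine mul_le_mul_right (ih _ _ _ ?_) _
          exact (D.galois _ _).1 (hwl.B2a _ hmem a ha) ⟨s, hs, rfl⟩
        · have h0 : M.dist c a = 0 := by simpa [PMF.mem_support_iff] using ha
          simp [h0]
      · simp [toMDP, he]
    · rcases hEC : P.EC n with _ | n'
      · simp [toMDP, hEC]
      · rw [tsum_eq_single n']
        · simp only [toMDP, hEC, if_true, one_mul]
          exact (ih _ _ _ (D.conc_mono (hwl.C2 _ _ hEC) hs)).trans (MDP.optReach_le_succ _ _ _ _)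
        · intro m hm
          simp [toMDP, hEC, hm]

end PASG

/-- The maximal probability of reaching a target node in the MDP
induced by a well-labeled finished PASG `P` for `M` (rooted at `n₀`, labeled by the
initial valuation) is at most the maximal probability of reaching a target state
in `M`. -/
theorem pasg_lower_soundness {Val AS Cmd Node : Type*} [PartialOrder AS] [Finite Cmd]
    (M : SymMDP Val Cmd) (D : AbsDom Val AS) (P : PASG Val AS Cmd Node)
    (φ : Val → Prop) (tc : Cmd)
    (htcg : ∀ s, M.guard tc s ↔ φ s) (htcd : M.dist tc = PMF.pure id)
    (hwl : PASG.WellLabeled M D P) (hfin : PASG.Finished M P)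
    (n₀ : Node) (hroot : P.Lc n₀ = M.init) :
    MDP.Pmax (PASG.toMDP M P n₀) {n | M.guard tc (P.Lc n)} ≤
      MDP.Pmax M.toMDP {s | M.guard tc s} := by
  have : Nonempty Cmd := ⟨tc⟩
  refine iSup_le fun σ => MDP.reachProbFrom_le_of_boundedReach_le _ _ _ _ _ fun k => ?_
  refine (PASG.boundedReach_le_optReach hwl tc n₀ σ.1 k n₀ M.init [] ?_).trans
    (MDP.optReach_le_PmaxFrom _ M.enabled_or_zero _ k _)
  exact hroot ▸ hwl.A1 n₀
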